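/- If 1 ≤ η ≤ n-2, 0 ≤ ε < t and n ≤ (q^{t(n-η)} - 1)/(q^t - 1), then there exists a (k,k-t)-sunflower {π₁,...,πₙ} with dim S + dim I = 2k + (n-2)t - ηt + ε. -/

import Mathlib

open Module

lemma sf_finrank_map {F V W : Type*} [Field F] [AddCommGroup V] [Module F V] [AddCommGroup W]
    [Module F W] (f : V →ₗ[F] W) (hf : Function.Injective f) (p : Submodule F V) :
    finrank F (p.map f) = finrank F p :=
  (Submodule.equivMapOfInjective f hf p).finrank_eq.symm

lemma sf_finrank_prod {F V W : Type*} [Field F] [AddCommGroup V] [Module F V] [AddCommGroup W]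
    [Module F W] [Module.Finite F V] [Module.Finite F W]
    (p : Submodule F V) (q : Submodule F W) :
    finrank F (p.prod q) = finrank F p + finrank F q := by
  let e : (p.prod q) ≃ₗ[F] (p × q) :=
    { toFun := fun x => (⟨x.1.1, x.2.1⟩, ⟨x.1.2, x.2.2⟩)
      invFun := fun x => ⟨(x.1.1, x.2.1), ⟨x.1.2, x.2.2⟩⟩
      map_add' := fun _ _ => rfl
      map_smul' := fun _ _ => rfl
      left_inv := fun _ => rfl
      right_inv := fun _ => rfl }
  rw [e.finrank_eq, finrank_prod]

/-- A finite field has an extension of any positive degree. -/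
lemma sf_exists_ext (F : Type*) [Field F] [Finite F] (t : ℕ) (ht : 1 ≤ t) :
    ∃ (K : Type) (_ : Field K) (_ : Finite K) (_ : Algebra F K), Module.Finite F K ∧
      finrank F K = t ∧ Nat.card K = Nat.card F ^ t := by
  obtain ⟨p, hp⟩ := CharP.exists F
  have : Fact p.Prime := ⟨CharP.char_is_prime F p⟩
  have : NeZero t := ⟨by omega⟩
  exact ⟨FiniteField.Extension F p t, inferInstance, inferInstance, inferInstance, inferInstance,
    FiniteField.finrank_extension F p t, FiniteField.natCard_extension F p t⟩

/-- `n` distinct points of projective space, the first `s` being the coordinate points. -/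
lemma sf_exists_points (K : Type) [Field K] [Finite K] (n s : ℕ) (hs : s < n)
    (hc : n ≤ (Nat.card K ^ s - 1) / (Nat.card K - 1)) :
    ∃ f : Fin n → Projectivization K (Fin s → K), Function.Injective f ∧
      ∀ j : Fin s, Pi.single j (1 : K) ∈ (f ⟨j, by omega⟩).submodule := by
  classical
  have : Finite (Projectivization K (Fin s → K)) := Quotient.finite _
  have := Fintype.ofFinite (Projectivization K (Fin s → K))
  have hcard : n ≤ Fintype.card (Projectivization K (Fin s → K)) := by
    rw [Fintype.card_eq_nat_card, Projectivization.card'' K (Fin s → K)]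
    simpa [Nat.card_fun] using hc
  let b : Fin s → Projectivization K (Fin s → K) := fun j =>
    Projectivization.mk K (Pi.single j (1 : K)) (by simp)
  have hb : Function.Injective b := by
    intro i j hij
    by_contra hne
    rw [Projectivization.mk_eq_mk_iff'] at hij
    obtain ⟨a, ha⟩ := hij
    have := congrFun ha i
    simp [hne] at this
  obtain ⟨T, hT, hTn⟩ := Finset.exists_superset_card_eq (s := Finset.univ.image b) (n := n)
    (by rw [Finset.card_image_of_injective _ hb]; simp; omega) hcard
  rcases Nat.eq_zero_or_pos s with h0 | h0
  · obtain ⟨e⟩ : Nonempty (Fin n ≃ T) := by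
      rw [← Fintype.card_eq]; simp [hTn]
    exact ⟨fun i => e i, fun i j h => e.injective (Subtype.ext h), fun j => absurd j.2 (by omega)⟩
  let f : Fin n → Projectivization K (Fin s → K) := fun i =>
    if h : i.1 < s then b ⟨i, h⟩ else b ⟨0, h0⟩
  obtain ⟨g, hg⟩ := Finset.exists_equiv_extend_of_card_eq (α := Fin n) (t := T)
    (by simp [hTn]) (s := Finset.univ.filter fun i => i.1 < s) (f := f)
    (by
      intro x hx
      simp only [Finset.mem_image, Finset.mem_filter] at hx
      obtain ⟨i, ⟨-, hi⟩, rfl⟩ := hx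
      apply hT
      simp [f, hi])
    (by
      intro i hi j hj hij
      simp only [Finset.coe_filter, Set.mem_ofPred_eq, Finset.mem_univ, true_and] at hi hj
      simp only [f, hi, hj, dif_pos] at hij
      have := hb hij
      simp at this
      exact Fin.ext this)
  refine ⟨fun i => g i, fun i j h => g.injective (Subtype.ext h), fun j => ?_⟩
  have h1 := hg ⟨j, by omega⟩ (by simp)
  simp only [h1]
  simp only [f, j.2, dif_pos]
  simp only [b, Projectivization.submodule_mk]
  exact Submodule.mem_span_singleton_self _

/-- The construction in an abstract vector space. -/
lemma sf_construct (F : Type*) [Field F] [Finite F] (K : Type) [Field K] [Finite K] [Algebra F K]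
    [Module.Finite F K] (n s t c ε : ℕ) (hs : s < n) (hK : finrank F K = t) (hε : ε < t)
    (f : Fin n → Projectivization K (Fin s → K)) (hf : Function.Injective f)
    (hb : ∀ j : Fin s, Pi.single j (1 : K) ∈ (f ⟨j, by omega⟩).submodule) :
    ∃ (π : Fin n → Submodule F (((Fin s → K) × (Fin ε → F)) × (Fin c → F)))
      (C : Submodule F (((Fin s → K) × (Fin ε → F)) × (Fin c → F))),
      (∀ i, finrank F (π i) = t + c) ∧ finrank F C = c ∧
      (∀ i j, i ≠ j → π i ⊓ π j = C) ∧ (⨆ i, π i) = ⊤ := by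
  classical
  let L : Fin n → Submodule F (Fin s → K) := fun i => (f i).submodule.restrictScalars F
  have hL : ∀ i, finrank F (L i) = t := by
    intro i
    have h1 : finrank F (f i).submodule = t := by
      rw [← finrank_mul_finrank F K (f i).submodule, Projectivization.finrank_submodule, hK,
        mul_one]
    exact h1
  have hdisj : ∀ i j, i ≠ j → ∀ x, x ∈ L i → x ∈ L j → x = 0 := by
    intro i j hij x hi hj
    by_contra hx
    apply hij
    apply hf
    apply Projectivization.submodule_injective
    have key : ∀ l, x ∈ L l → (f l).submodule = K ∙ x := by
      intro l hl
      symm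
      apply Submodule.eq_of_le_of_finrank_eq
      · rw [Submodule.span_singleton_le_iff_mem]; exact hl
      · rw [finrank_span_singleton hx, Projectivization.finrank_submodule]
    rw [key i hi, key j hj]
  let last : Fin n := ⟨n - 1, by omega⟩
  obtain ⟨φ, hφ⟩ : ∃ φ : (Fin s → K) →ₗ[F] (Fin ε → F), ∀ y, ∃ x ∈ L last, φ x = y := by
    let e : L last ≃ₗ[F] (Fin t → F) := LinearEquiv.ofFinrankEq _ _ (by simp [hL])
    let g := (LinearMap.funLeft F F (Fin.castLE hε.le)) ∘ₗ e.toLinearMap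
    have hg : Function.Surjective g := by
      exact Function.Surjective.comp (g := LinearMap.funLeft F F (Fin.castLE hε.le)) (f := e)
        (LinearMap.funLeft_surjective_of_injective F F _ (Fin.castLE_injective _)) e.surjective
    obtain ⟨φ, hφ⟩ := LinearMap.exists_extend g
    refine ⟨φ, fun y => ?_⟩
    obtain ⟨x, hx⟩ := hg y
    refine ⟨x, x.2, ?_⟩
    rw [← hx, ← hφ]; rfl
  let ψ : Fin n → ((Fin s → K) →ₗ[F] (Fin ε → F)) := fun i => if i = last then φ else 0
  let G : Fin n → ((Fin s → K) →ₗ[F] ((Fin s → K) × (Fin ε → F))) :=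
    fun i => LinearMap.prod LinearMap.id (ψ i)
  have hG : ∀ i, Function.Injective (G i) := fun i x y h => congrArg Prod.fst h
  let π : Fin n → Submodule F (((Fin s → K) × (Fin ε → F)) × (Fin c → F)) :=
    fun i => ((L i).map (G i)).prod ⊤
  have hmem : ∀ i x y z, ((x, y), z) ∈ π i ↔ x ∈ L i ∧ ψ i x = y := by
    intro i x y z
    simp only [π, Submodule.mem_prod, Submodule.mem_map, Submodule.mem_top, and_true]
    constructor
    · rintro ⟨x', hx', h⟩
      have h1 : x' = x := congrArg Prod.fst h
      have h2 : ψ i x' = y := congrArg Prod.snd h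
      subst h1
      exact ⟨hx', h2⟩
    · rintro ⟨hx, rfl⟩
      exact ⟨x, hx, rfl⟩
  refine ⟨π, (⊥ : Submodule F _).prod ⊤, ?_, ?_, ?_, ?_⟩
  · intro i
    have h1 : finrank F (π i) =
        finrank F ((L i).map (G i)) + finrank F (⊤ : Submodule F (Fin c → F)) :=
      sf_finrank_prod _ _
    rw [h1, sf_finrank_map _ (hG i), hL]
    simp
  · rw [sf_finrank_prod]; simp
  · intro i j hij
    ext ⟨⟨x, y⟩, z⟩
    rw [Submodule.mem_inf, hmem, hmem]
    simp only [Submodule.mem_prod, Submodule.mem_bot, Submodule.mem_top, and_true, Prod.mk_eq_zero]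
    constructor
    · rintro ⟨⟨h1, h2⟩, h3, h4⟩
      have h0 := hdisj i j hij x h1 h3
      subst h0
      exact ⟨rfl, by rw [← h2, map_zero]⟩
    · rintro ⟨rfl, rfl⟩
      simp
  · rw [eq_top_iff]
    rintro ⟨⟨x, y⟩, z⟩ -
    have hle : ∀ i, π i ≤ ⨆ i, π i := le_iSup π
    have hx : ∀ x : Fin s → K, ((x, 0), 0) ∈ ⨆ i, π i := by
      intro x
      let ι : (Fin s → K) →ₗ[F] (((Fin s → K) × (Fin ε → F)) × (Fin c → F)) :=
        LinearMap.inl F _ _ ∘ₗ LinearMap.inl F _ _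
      have hι : ∀ x, ((x, 0), 0) = ι x := fun x => rfl
      rw [hι, ← Finset.univ_sum_single x, map_sum]
      refine Submodule.sum_mem _ fun j _ => ?_
      rw [← hι]
      apply hle ⟨j, by omega⟩
      rw [hmem]
      constructor
      · have := (f ⟨j, by omega⟩).submodule.smul_mem (x j) (hb j)
        rw [← Pi.single_smul, smul_eq_mul, mul_one] at this
        exact this
      · have : (⟨j, by omega⟩ : Fin n) ≠ last := by
          have := j.2
          simp only [last, ne_eq, Fin.mk.injEq]; omega
        simp [ψ, this]
    obtain ⟨x', hx', hy⟩ := hφ y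
    have h1 := hx (x - x')
    have h2 : ((x', y), z) ∈ ⨆ i, π i := by
      apply hle last
      rw [hmem]
      exact ⟨hx', by simp [ψ, hy]⟩
    have := Submodule.add_mem _ h1 h2
    simpa using this

theorem sunflower_spectrum_exists_eps (F : Type*) [Field F] [Fintype F]
    (n k t η ε : ℕ) (hn : 3 ≤ n) (ht : 1 ≤ t) (htk : t ≤ k)
    (hη₁ : 1 ≤ η) (hη₂ : η ≤ n - 2) (hε : ε < t)
    (hcard : n ≤ ((Fintype.card F) ^ (t * (n - η)) - 1) / ((Fintype.card F) ^ t - 1)) :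
    ∃ (m : ℕ) (π : Fin n → Submodule F (Fin m → F)) (C : Submodule F (Fin m → F)),
      Function.Injective π ∧
      (∀ i, finrank F ↥(π i) = k) ∧
      finrank F ↥C = k - t ∧
      (∀ i j, i ≠ j → π i ⊓ π j = C) ∧
      finrank F ↥(⨆ i, π i) +
        finrank F ↥(⨆ i, ⨆ j, ⨆ (_ : i < j), π i ⊓ π j) =
          2 * k + (n - 2) * t - η * t + ε := by
  obtain ⟨K, _, _, _, _, hK, hKc⟩ := sf_exists_ext F t ht
  obtain ⟨f, hf, hb⟩ := sf_exists_points K n (n - η) (by omega)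
    (by rw [hKc, ← pow_mul, ← Fintype.card_eq_nat_card]; exact hcard)
  obtain ⟨π, C, h1, h2, h3, h4⟩ := sf_construct F K n (n - η) t (k - t) ε (by omega) hK hε f hf hb
  let V := ((Fin (n - η) → K) × (Fin ε → F)) × (Fin (k - t) → F)
  have hV : finrank F V = (n - η) * t + ε + (k - t) := by
    simp [V, finrank_prod, finrank_pi_fintype, hK]
  let e : V ≃ₗ[F] (Fin (finrank F V) → F) := LinearEquiv.ofFinrankEq _ _ (by simp)
  have hinf : ∀ i j, i ≠ j → (π i).map e.toLinearMap ⊓ (π j).map e.toLinearMap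
      = C.map e.toLinearMap := by
    intro i j hij
    rw [← Submodule.map_inf _ e.injective, h3 i j hij]
  have hk : ∀ i, finrank F ((π i).map e.toLinearMap) = k := by
    intro i
    rw [sf_finrank_map _ e.injective, h1]; omega
  have hC : finrank F (C.map e.toLinearMap) = k - t := by
    rw [sf_finrank_map _ e.injective, h2]
  refine ⟨finrank F V, fun i => (π i).map e.toLinearMap, C.map e.toLinearMap, ?_, hk, hC, hinf, ?_⟩
  · intro i j hij
    by_contra hne
    have h := hinf i j hne
    simp only at hij
    rw [← hij, inf_idem] at h
    have h5 := hk i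
    rw [h, hC] at h5
    omega
  · have hS : (⨆ i, (π i).map e.toLinearMap) = ⊤ := by
      rw [← Submodule.map_iSup, h4, Submodule.map_top, LinearMap.range_eq_top]
      exact e.surjective
    have hI : (⨆ i, ⨆ j, ⨆ (_ : i < j), (π i).map e.toLinearMap ⊓ (π j).map e.toLinearMap)
        = C.map e.toLinearMap := by
      apply le_antisymm
      · refine iSup_le fun i => iSup_le fun j => iSup_le fun hij => ?_
        rw [hinf i j hij.ne]
      · let i0 : Fin n := ⟨0, by omega⟩
        let i1 : Fin n := ⟨1, by omega⟩
        have h01 : i0 < i1 := by simp [i0, i1]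
        rw [← hinf i0 i1 h01.ne]
        exact le_iSup_of_le i0 (le_iSup_of_le i1 (le_iSup_of_le h01 le_rfl))
    rw [hS, hI, hC, finrank_top, finrank_fin_fun, hV]
    obtain ⟨d, rfl⟩ : ∃ d, n = η + 2 + d := ⟨n - η - 2, by omega⟩
    obtain ⟨c, rfl⟩ : ∃ c, k = t + c := ⟨k - t, by omega⟩
    have e1 : η + 2 + d - η = d + 2 := by omega
    have e2 : η + 2 + d - 2 = η + d := by omega
    have e3 : t + c - t = c := by omega
    rw [e1, e2, e3, add_mul η d t]
    have e4 : 2 * (t + c) + (η * t + d * t) - η * t = 2 * (t + c) + d * t := by omega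
    rw [e4]; ring
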